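/- Let r > 1 be a real number, let K be a finite extension of ℚ, and let χ be a real Dirichlet character. Then the closure of the image σ_{r,K,χ}(I_K) has only finitely many connected components; that is, C_{r,K,χ} is finite. -/

import Mathlib

open NumberField

/-- The twisted ideal divisor function `σ_{r,K,χ}(I) = ∑_{J ∣ I} χ(N(J)) N(J)^{-r}`. -/
noncomputable def sigmaChi (K : Type*) [Field K] [NumberField K] {m : ℕ}
    (χ : DirichletCharacter ℝ m) (r : ℝ) (I : Ideal (𝓞 K)) : ℝ :=
  ∑' J : {J : Ideal (𝓞 K) // J ∣ I},
    χ ((Ideal.absNorm (J : Ideal (𝓞 K)) : ℕ) : ZMod m) *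
      (Ideal.absNorm (J : Ideal (𝓞 K)) : ℝ) ^ (-r)

theorem aux_grid (S : Set ℝ) (B c : ℝ) (hc : 0 < c) (hB : ∀ x ∈ S, |x| ≤ B)
    (h : ∀ x ∈ S, ∃ C : Set ℝ, C ⊆ closure S ∧ IsPreconnected C ∧ x ∈ C ∧
      ∃ a ∈ C, ∃ b ∈ C, a + c ≤ b) :
    Finite (ConnectedComponents ↥(closure S)) := by
  have hB' : ∀ x ∈ closure S, |x| ≤ B := by
    intro x hx
    have : closure S ⊆ {x | |x| ≤ B} :=
      closure_minimal hB (isClosed_le continuous_abs continuous_const)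
    exact this hx
  set G : Set ℤ := Set.Icc (⌈-B / c⌉) (⌈B / c⌉) with hG
  have hGf : G.Finite := Set.finite_Icc _ _
  have hcov : closure S ⊆ ⋃ n ∈ G, connectedComponentIn (closure S) (c * (n : ℝ)) := by
    apply closure_minimal
    · intro x hx
      obtain ⟨C, hCS, hCc, hxC, a, ha, b, hb, hab⟩ := h x hx
      have haB := abs_le.mp (hB' a (hCS ha))
      have h1 : a ≤ c * (⌈a / c⌉ : ℝ) := by
        have := Int.le_ceil (a / c)
        rw [div_le_iff₀ hc] at this
        linarith
      have h2 : c * (⌈a / c⌉ : ℝ) ≤ b := by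
        have := Int.ceil_lt_add_one (a / c)
        have h3 : c * (⌈a / c⌉ : ℝ) ≤ c * (a / c + 1) := by gcongr
        have h4 : c * (a / c + 1) = a + c := by field_simp
        linarith
      have hmem : c * (⌈a / c⌉ : ℝ) ∈ C := hCc.ordConnected.out ha hb ⟨h1, h2⟩
      simp only [Set.mem_iUnion]
      refine ⟨⌈a / c⌉, ⟨?_, ?_⟩, hCc.subset_connectedComponentIn hmem hCS hxC⟩
      · apply Int.ceil_le_ceil; gcongr; linarith
      · apply Int.ceil_le_ceil; gcongr; linarith
    · refine hGf.isClosed_biUnion fun n _ => ?_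
      by_cases hF : c * (n : ℝ) ∈ closure S
      · rw [connectedComponentIn_eq_image hF]
        exact isClosed_closure.isClosedEmbedding_subtypeVal.isClosedMap _
          isClosed_connectedComponent
      · rw [connectedComponentIn_eq_empty hF]; exact isClosed_empty
  have : Finite {n : ℤ // n ∈ G ∧ c * (n : ℝ) ∈ closure S} :=
    Set.Finite.subset hGf (fun n hn => hn.1)
  refine Finite.of_surjective
    (fun n : {n : ℤ // n ∈ G ∧ c * (n : ℝ) ∈ closure S} =>
      (ConnectedComponents.mk (⟨c * (n.1 : ℝ), n.2.2⟩ : ↥(closure S)))) ?_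
  intro q
  obtain ⟨y, rfl⟩ := ConnectedComponents.surjective_coe q
  obtain ⟨n, hn, hy⟩ := Set.mem_iUnion₂.mp (hcov y.2)
  have hF : c * (n : ℝ) ∈ closure S := by
    by_contra hcon
    rw [connectedComponentIn_eq_empty hcon] at hy
    exact hy
  rw [connectedComponentIn_eq_image hF] at hy
  obtain ⟨y', hy', hyy⟩ := hy
  have : y' = y := Subtype.ext hyy
  subst this
  refine ⟨⟨n, hn, hF⟩, ?_⟩
  exact (ConnectedComponents.coe_eq_coe'.mpr hy').symm

theorem aux_gap {ι : Type*} [DecidableEq ι] (N : ι → ℕ) (f : ι → ℕ → ℝ) (d lo hi : ι → ℝ)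
    (hlo : ∀ i, ∃ k, f i k = lo i) (hhi : ∀ i, ∃ k, f i k = hi i)
    (hd : ∀ i, 0 ≤ d i) (hdl : ∀ i, d i ≤ hi i - lo i)
    (δ : ℝ) (hδ : 0 ≤ δ) (s : Finset ι) :
    (∀ a ∈ s, hi a - lo a ≤ ∑ b ∈ s with N a < N b, d b + δ) →
    ∀ y, ∑ i ∈ s, lo i ≤ y → y ≤ ∑ i ∈ s, hi i →
      ∃ e : ι → ℕ, ∑ i ∈ s, f i (e i) ≤ y ∧ y ≤ ∑ i ∈ s, f i (e i) + δ := by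
  induction s using Finset.induction_on_min_value N with
  | empty =>
    intro _ y h1 h2
    refine ⟨fun _ => 0, ?_, ?_⟩ <;> simp at * <;> linarith
  | insert a s ha hmin ih =>
    intro H y h1 h2
    rw [Finset.sum_insert ha] at h1 h2
    have H' : ∀ x ∈ s, hi x - lo x ≤ ∑ b ∈ s with N x < N b, d b + δ := by
      intro x hx
      have := H x (Finset.mem_insert_of_mem hx)
      rwa [Finset.filter_insert, if_neg (not_lt.mpr (hmin x hx))] at this
    have IH := ih H'
    have Ha : hi a - lo a ≤ ∑ i ∈ s, hi i - ∑ i ∈ s, lo i + δ := by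
      have h3 := H a (Finset.mem_insert_self _ _)
      rw [Finset.filter_insert, if_neg (lt_irrefl _)] at h3
      have h4 : ∑ b ∈ s with N a < N b, d b ≤ ∑ b ∈ s, d b :=
        Finset.sum_le_sum_of_subset_of_nonneg (Finset.filter_subset _ _) (fun i _ _ => hd i)
      have h5 : ∑ b ∈ s, d b ≤ ∑ i ∈ s, hi i - ∑ i ∈ s, lo i := by
        rw [← Finset.sum_sub_distrib]
        exact Finset.sum_le_sum fun i _ => hdl i
      linarith
    have key : ∀ k, ∀ e : ι → ℕ, ∑ i ∈ insert a s, f i ((Function.update e a k) i) =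
        f a k + ∑ i ∈ s, f i (e i) := by
      intro k e
      rw [Finset.sum_insert ha, Function.update_self]
      congr 1
      refine Finset.sum_congr rfl fun i hi => ?_
      rw [Function.update_of_ne]
      rintro rfl; exact ha hi
    obtain ⟨kl, hkl⟩ := hlo a
    obtain ⟨kh, hkh⟩ := hhi a
    by_cases c1 : y - lo a ≤ ∑ i ∈ s, hi i
    · obtain ⟨e, he1, he2⟩ := IH (y - lo a) (by linarith) c1
      exact ⟨Function.update e a kl, by rw [key]; linarith, by rw [key]; linarith⟩
    · by_cases c2 : ∑ i ∈ s, lo i ≤ y - hi a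
      · obtain ⟨e, he1, he2⟩ := IH (y - hi a) c2 (by linarith)
        exact ⟨Function.update e a kh, by rw [key]; linarith, by rw [key]; linarith⟩
      · choose e he using hhi
        have hs : ∑ i ∈ s, f i (e i) = ∑ i ∈ s, hi i := Finset.sum_congr rfl fun i _ => he i
        exact ⟨Function.update e a kl, by rw [key]; linarith, by rw [key]; linarith⟩

theorem aux_chain {ι : Type*} (N : ι → ℕ) (f : ι → ℕ → ℝ) (w : ι → ℝ)
    (hw0 : ∀ i, 0 ≤ w i) (hw : Summable w) (hf0 : ∀ i, f i 0 = 0)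
    (hf : ∀ i k, |f i k| ≤ 2 * w i) (hf1 : ∀ i, w i / 2 ≤ |f i 1|)
    (hN : ∀ a, 8 * w a ≤ ∑' b, Set.indicator {b | N a < N b} w b) :
    (closure (Set.range fun e : ι →₀ ℕ => e.sum f)).OrdConnected := by
  classical
  suffices hmain : ∀ e1 e2 : ι →₀ ℕ, ∀ z, e1.sum f ≤ z → z ≤ e2.sum f →
      z ∈ closure (Set.range fun e : ι →₀ ℕ => e.sum f) by
    constructor
    intro x hx y hy z hz
    rcases eq_or_lt_of_le hz.1 with h | hxz
    · rwa [← h]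
    rcases eq_or_lt_of_le hz.2 with h | hzy
    · rwa [h]
    obtain ⟨x', hx', e1, rfl⟩ := mem_closure_iff.mp hx (Set.Iio z) isOpen_Iio hxz
    obtain ⟨y', hy', e2, rfl⟩ := mem_closure_iff.mp hy (Set.Ioi z) isOpen_Ioi hzy
    exact hmain e1 e2 z (le_of_lt hx') (le_of_lt hy')
  intro e1 e2 z h1 h2
  rw [Metric.mem_closure_iff]
  intro ε hε
  set δ := ε / 2 with hδ
  have hδ0 : 0 < δ := by positivity
  have hev := (tendsto_order.mp hw.hasSum).1 (∑' i, w i - δ) (by linarith)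
  obtain ⟨U0, hU0⟩ := Filter.eventually_atTop.mp hev
  set U := U0 ∪ e1.support ∪ e2.support with hU
  have hUU : ∑' i, w i - δ < ∑ i ∈ U, w i := hU0 U (by
    intro i hi; simp [hU]; tauto)
  set M := (U.sup e1 + U.sup e2 + 1) with hM
  have hmn : ∀ i, ∃ k ∈ Finset.range (M + 1), ∀ k' ∈ Finset.range (M + 1), f i k ≤ f i k' :=
    fun i => Finset.exists_min_image _ _ ⟨0, by simp⟩
  have hmx : ∀ i, ∃ k ∈ Finset.range (M + 1), ∀ k' ∈ Finset.range (M + 1), f i k' ≤ f i k :=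
    fun i => Finset.exists_max_image _ _ ⟨0, by simp⟩
  choose kl hkl1 hkl using hmn
  choose kh hkh1 hkh using hmx
  have m0 : 0 ∈ Finset.range (M + 1) := by simp
  have m1 : 1 ∈ Finset.range (M + 1) := by simp [hM]
  have hdiff : ∀ i, w i / 2 ≤ f i (kh i) - f i (kl i) := by
    intro i
    have a1 := hkl i 0 m0
    have a2 := hkl i 1 m1
    have a3 := hkh i 0 m0
    have a4 := hkh i 1 m1
    rw [hf0] at a1 a3
    refine (hf1 i).trans ?_
    rw [abs_le']
    constructor <;> linarith
  have hdiff2 : ∀ i, f i (kh i) - f i (kl i) ≤ 4 * w i := by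
    intro i
    have b1 := abs_le.mp (hf i (kh i))
    have b2 := abs_le.mp (hf i (kl i))
    linarith
  have hsum : ∀ e : ι →₀ ℕ, e.support ⊆ U → e.sum f = ∑ i ∈ U, f i (e i) := by
    intro e he
    exact Finsupp.sum_of_support_subset _ he _ (fun i _ => hf0 i)
  have hs1 : e1.support ⊆ U := by intro i hi; simp only [hU, Finset.mem_union]; tauto
  have hs2 : e2.support ⊆ U := by intro i hi; simp only [hU, Finset.mem_union]; tauto
  obtain ⟨e, he1, he2⟩ := aux_gap N f (fun i => w i / 2) (fun i => f i (kl i))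
    (fun i => f i (kh i)) (fun i => ⟨_, rfl⟩) (fun i => ⟨_, rfl⟩)
    (fun i => by have := hw0 i; positivity) hdiff δ hδ0.le U
    (by
      intro a ha
      have hind : Summable (Set.indicator {b | N a < N b} w) := hw.indicator _
      have t1 : ∑ i ∈ U, (w i - Set.indicator {b | N a < N b} w i) ≤
          ∑' i, (w i - Set.indicator {b | N a < N b} w i) :=
        (hw.sub hind).sum_le_tsum U (fun i _ => by
          have := Set.indicator_le_self' (s := {b | N a < N b}) (f := w) (fun i _ => hw0 i) i
          linarith)
      rw [hw.tsum_sub hind, Finset.sum_sub_distrib] at t1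
      have t2 : ∑ i ∈ U, Set.indicator {b | N a < N b} w i = ∑ b ∈ U with N a < N b, w b := by
        rw [Finset.sum_filter]
        exact Finset.sum_congr rfl fun i _ => by simp [Set.indicator_apply]
      have t3 := hN a
      have t4 := hdiff2 a
      rw [← Finset.sum_div]
      linarith)
    z
    (by
      rw [hsum e1 hs1] at h1
      refine le_trans (Finset.sum_le_sum fun i hi => hkl i _ ?_) h1
      have := Finset.le_sup (f := e1) hi
      simp only [Finset.mem_range]; omega)
    (by
      rw [hsum e2 hs2] at h2
      refine le_trans h2 (Finset.sum_le_sum fun i hi => hkh i _ ?_)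
      have := Finset.le_sup (f := e2) hi
      simp only [Finset.mem_range]; omega)
  refine ⟨_, ⟨Finsupp.indicator U (fun i _ => e i), rfl⟩, ?_⟩
  have : (Finsupp.indicator U (fun i _ => e i)).sum f = ∑ i ∈ U, f i (e i) := by
    rw [hsum _ (Finsupp.support_indicator_subset _ _)]
    exact Finset.sum_congr rfl fun i hi => by rw [Finsupp.indicator_of_mem hi]
  simp only [this, Real.dist_eq]
  rw [abs_lt]; constructor <;> linarith

open IsDedekindDomain in
/-- The ideal with the given exponents. -/
noncomputable def auxIdeal (K : Type*) [Field K] [NumberField K]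
    (e : HeightOneSpectrum (𝓞 K) →₀ ℕ) : Ideal (𝓞 K) := e.prod fun P k => P.asIdeal ^ k

open IsDedekindDomain in
theorem auxIdeal_ne_zero (K : Type*) [Field K] [NumberField K]
    (e : HeightOneSpectrum (𝓞 K) →₀ ℕ) : auxIdeal K e ≠ 0 := by
  unfold auxIdeal Finsupp.prod
  rw [Finset.prod_ne_zero_iff]
  intro P _
  exact pow_ne_zero _ P.ne_bot

open IsDedekindDomain in
theorem auxIdeal_surj (K : Type*) [Field K] [NumberField K] (I : Ideal (𝓞 K)) (hI : I ≠ 0) :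
    ∃ e, auxIdeal K e = I := by
  classical
  induction I using UniqueFactorizationMonoid.induction_on_prime with
  | h₁ => exact absurd rfl hI
  | h₂ x hx => exact ⟨0, by rw [Ideal.isUnit_iff] at hx; simp [auxIdeal, hx]⟩
  | h₃ a p ha hp ih =>
    obtain ⟨e, rfl⟩ := ih ha
    refine ⟨Finsupp.single ⟨p, Ideal.isPrime_of_prime hp, hp.ne_zero⟩ 1 + e, ?_⟩
    unfold auxIdeal
    rw [Finsupp.prod_add_index' (by simp) (by intros; exact pow_add _ _ _),
      Finsupp.prod_single_index (by simp)]
    simp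

/-- The multiplicative summand. -/
noncomputable def auxF (K : Type*) [Field K] [NumberField K] {m : ℕ}
    (χ : DirichletCharacter ℝ m) (r : ℝ) (J : Ideal (𝓞 K)) : ℝ :=
  χ ((Ideal.absNorm J : ℕ) : ZMod m) * (Ideal.absNorm J : ℝ) ^ (-r)

theorem auxF_mul (K : Type*) [Field K] [NumberField K] {m : ℕ}
    (χ : DirichletCharacter ℝ m) (r : ℝ) (I J : Ideal (𝓞 K)) :
    auxF K χ r (I * J) = auxF K χ r I * auxF K χ r J := by
  unfold auxF
  rw [map_mul, Nat.cast_mul, Nat.cast_mul, map_mul,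
    Real.mul_rpow (Nat.cast_nonneg _) (Nat.cast_nonneg _)]
  ring

theorem auxF_one (K : Type*) [Field K] [NumberField K] {m : ℕ}
    (χ : DirichletCharacter ℝ m) (r : ℝ) : auxF K χ r 1 = 1 := by
  unfold auxF
  simp

theorem auxF_pow (K : Type*) [Field K] [NumberField K] {m : ℕ}
    (χ : DirichletCharacter ℝ m) (r : ℝ) (I : Ideal (𝓞 K)) (k : ℕ) :
    auxF K χ r (I ^ k) = auxF K χ r I ^ k := by
  induction k with
  | zero => simp [auxF_one, -Ideal.one_eq_top]
  | succ k ih => rw [pow_succ, auxF_mul, ih, pow_succ]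

theorem sigma_eq_sum (K : Type*) [Field K] [NumberField K] {m : ℕ}
    (χ : DirichletCharacter ℝ m) (r : ℝ) (I : Ideal (𝓞 K)) (D : Finset (Ideal (𝓞 K)))
    (hD : ∀ J, J ∈ D ↔ J ∣ I) : sigmaChi K χ r I = ∑ J ∈ D, auxF K χ r J := by
  unfold sigmaChi
  rw [← Finset.tsum_subtype]
  exact ((Equiv.subtypeEquivRight hD).tsum_eq
    (fun J : {J : Ideal (𝓞 K) // J ∣ I} => auxF K χ r J)).symm

theorem sigma_mul (K : Type*) [Field K] [NumberField K] {m : ℕ}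
    (χ : DirichletCharacter ℝ m) (r : ℝ) (I J : Ideal (𝓞 K)) (hI : I ≠ 0) (hJ : J ≠ 0)
    (hIJ : IsCoprime I J) :
    sigmaChi K χ r (I * J) = sigmaChi K χ r I * sigmaChi K χ r J := by
  classical
  have hfin : ∀ I : Ideal (𝓞 K), I ≠ 0 → ∃ D : Finset (Ideal (𝓞 K)), ∀ J, J ∈ D ↔ J ∣ I := by
    intro I hI
    have := UniqueFactorizationMonoid.fintypeSubtypeDvd I hI
    have hf : {J : Ideal (𝓞 K) | J ∣ I}.Finite :=
      Set.finite_coe_iff.mp (Finite.of_fintype {J : Ideal (𝓞 K) // J ∣ I})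
    exact ⟨hf.toFinset, by simp⟩
  obtain ⟨D1, h1⟩ := hfin I hI
  obtain ⟨D2, h2⟩ := hfin J hJ
  rw [sigma_eq_sum K χ r I D1 h1, sigma_eq_sum K χ r J D2 h2, Finset.sum_mul_sum,
    ← Finset.sum_product',
    sigma_eq_sum K χ r (I * J) ((D1 ×ˢ D2).image fun p => p.1 * p.2), Finset.sum_image]
  · exact Finset.sum_congr rfl fun p _ => auxF_mul _ _ _ _ _
  · rintro ⟨a, b⟩ hab ⟨a', b'⟩ hab' h
    simp only [Finset.coe_product, Set.mem_prod, Finset.mem_coe, h1, h2] at hab hab' h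
    have cop : ∀ x y, x ∣ I → y ∣ J → IsCoprime x y := fun x y hx hy =>
      (hIJ.of_isCoprime_of_dvd_left hx).of_isCoprime_of_dvd_right hy
    have e1 : a ∣ a' := (cop a b' hab.1 hab'.2).dvd_of_dvd_mul_right (h ▸ dvd_mul_right a b)
    have e2 : a' ∣ a := (cop a' b hab'.1 hab.2).dvd_of_dvd_mul_right (h ▸ dvd_mul_right a' b')
    have e3 : b ∣ b' := (cop a' b hab'.1 hab.2).symm.dvd_of_dvd_mul_left (h ▸ dvd_mul_left b a)
    have e4 : b' ∣ b := (cop a b' hab.1 hab'.2).symm.dvd_of_dvd_mul_left (h ▸ dvd_mul_left b' a')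
    rw [Ideal.dvd_iff_le] at e1 e2 e3 e4
    rw [le_antisymm e2 e1, le_antisymm e4 e3]
  · intro L
    simp only [Finset.mem_image, Finset.mem_product, h1, h2, Prod.exists]
    constructor
    · rintro ⟨a, b, ⟨ha, hb⟩, rfl⟩
      exact mul_dvd_mul ha hb
    · intro h
      obtain ⟨a, b, ha, hb, rfl⟩ := exists_dvd_and_dvd_of_dvd_mul h
      exact ⟨a, b, ⟨ha, hb⟩, rfl⟩

/-- Local factor. -/
noncomputable def auxS (x : ℝ) (k : ℕ) : ℝ := ∑ i ∈ Finset.range (k + 1), x ^ i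

open IsDedekindDomain in
theorem sigma_prime_pow (K : Type*) [Field K] [NumberField K] {m : ℕ}
    (χ : DirichletCharacter ℝ m) (r : ℝ) (P : HeightOneSpectrum (𝓞 K)) (k : ℕ) :
    sigmaChi K χ r (P.asIdeal ^ k) = auxS (auxF K χ r P.asIdeal) k := by
  classical
  rw [sigma_eq_sum K χ r _ ((Finset.range (k + 1)).image fun i => P.asIdeal ^ i),
    Finset.sum_image, auxS]
  · exact Finset.sum_congr rfl fun i _ => auxF_pow _ _ _ _ _
  · intro i _ j _ h
    exact pow_injective_of_not_isUnit P.prime.not_isUnit P.ne_bot h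
  · intro J
    rw [dvd_prime_pow P.prime]
    simp only [Finset.mem_image, Finset.mem_range, associated_iff_eq]
    constructor
    · rintro ⟨i, hi, rfl⟩; exact ⟨i, by omega, rfl⟩
    · rintro ⟨i, hi, rfl⟩; exact ⟨i, by omega, rfl⟩

open IsDedekindDomain in
theorem sigma_auxIdeal (K : Type*) [Field K] [NumberField K] {m : ℕ}
    (χ : DirichletCharacter ℝ m) (r : ℝ) (e : HeightOneSpectrum (𝓞 K) →₀ ℕ) :
    sigmaChi K χ r (auxIdeal K e) = e.prod fun P k => auxS (auxF K χ r P.asIdeal) k := by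
  classical
  unfold auxIdeal Finsupp.prod
  have : ∀ s : Finset (HeightOneSpectrum (𝓞 K)),
      sigmaChi K χ r (∏ P ∈ s, P.asIdeal ^ e P) = ∏ P ∈ s, auxS (auxF K χ r P.asIdeal) (e P) := by
    intro s
    induction s using Finset.induction_on with
    | empty =>
      rw [Finset.prod_empty, Finset.prod_empty, sigma_eq_sum K χ r 1 {1}]
      · rw [Finset.sum_singleton, auxF_one]
      · intro J
        rw [Finset.mem_singleton, ← isUnit_iff_dvd_one, isUnit_iff_eq_one]
    | insert P s hP ih =>
      rw [Finset.prod_insert hP, Finset.prod_insert hP, sigma_mul, ih, sigma_prime_pow]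
      · exact pow_ne_zero _ P.ne_bot
      · rw [Finset.prod_ne_zero_iff]
        intro P _
        exact pow_ne_zero _ P.ne_bot
      · apply IsCoprime.prod_right
        intro Q hQ
        apply HeightOneSpectrum.isCoprime_pow_of_ne
        rintro rfl
        exact hP hQ
  exact this _

theorem auxS_zero (x : ℝ) : auxS x 0 = 1 := by simp [auxS]

theorem auxS_one (x : ℝ) : auxS x 1 = 1 + x := by simp [auxS, Finset.sum_range_succ]

theorem auxS_bounds (x : ℝ) (hx : |x| ≤ 1 / 2) (k : ℕ) :
    1 - |x| ≤ auxS x k ∧ auxS x k ≤ (1 - |x|)⁻¹ := by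
  have h1 : auxS x k * (1 - x) = 1 - x ^ (k + 1) := by
    have := geom_sum_mul x (k + 1)
    unfold auxS
    linarith
  have hx0 := abs_nonneg x
  rcases Nat.eq_zero_or_pos k with rfl | hk
  · rw [auxS_zero]
    refine ⟨by linarith, (one_le_inv₀ (by linarith)).mpr (by linarith)⟩
  have hp : |x ^ (k + 1)| ≤ |x| ^ 2 := by
    rw [abs_pow]
    exact pow_le_pow_of_le_one hx0 (by linarith) (by omega)
  have hp' := abs_le.mp hp
  rcases le_total 0 x with h | h
  · rw [abs_of_nonneg h] at *
    have h0 : 0 ≤ x ^ (k + 1) := by positivity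
    have h2 : auxS x k ≤ (1 - x)⁻¹ := by
      rw [← one_div, le_div_iff₀ (by linarith)]; linarith
    refine ⟨?_, h2⟩
    have : (1 - x) * (1 - x) ≤ auxS x k * (1 - x) := by rw [h1]; nlinarith
    exact le_of_mul_le_mul_right this (by linarith)
  · rw [abs_of_nonpos h] at *
    constructor
    · have : (1 + x) * (1 - x) ≤ auxS x k * (1 - x) := by rw [h1]; nlinarith
      have := le_of_mul_le_mul_right this (by linarith)
      linarith
    · have : auxS x k * (1 - x) ≤ 1 * (1 - x) := by rw [h1]; nlinarith
      have := le_of_mul_le_mul_right this (by linarith)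
      exact this.trans ((one_le_inv₀ (by linarith)).mpr (by linarith))

theorem auxS_half (x : ℝ) (hx : |x| ≤ 1 / 2) (k : ℕ) : 1 / 2 ≤ auxS x k ∧ auxS x k ≤ 2 := by
  obtain ⟨h1, h2⟩ := auxS_bounds x hx k
  refine ⟨by linarith, h2.trans ?_⟩
  rw [inv_le_comm₀ (by linarith) (by norm_num)]
  linarith

theorem auxS_log (x : ℝ) (hx : |x| ≤ 1 / 2) (k : ℕ) : |Real.log (auxS x k)| ≤ 2 * |x| := by
  obtain ⟨h1, h2⟩ := auxS_bounds x hx k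
  have hx0 := abs_nonneg x
  have hpos : 0 < 1 - |x| := by linarith
  have hS : 0 < auxS x k := by linarith
  have a1 : Real.log (1 - |x|) ≤ Real.log (auxS x k) := Real.log_le_log hpos h1
  have a2 : Real.log (auxS x k) ≤ - Real.log (1 - |x|) := by
    rw [← Real.log_inv]; exact Real.log_le_log hS h2
  have a3 : 1 - (1 - |x|)⁻¹ ≤ Real.log (1 - |x|) := Real.one_sub_inv_le_log_of_pos hpos
  have a4 : (1 - |x|)⁻¹ ≤ 1 + 2 * |x| := by
    rw [← one_div, div_le_iff₀ hpos]; nlinarith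
  rw [abs_le]; constructor <;> linarith

theorem aux_log_one (x : ℝ) (hx : |x| ≤ 1 / 2) : |x| / 2 ≤ |Real.log (1 + x)| := by
  have hx' := abs_le.mp hx
  have hpos : 0 < 1 + x := by linarith
  rcases le_total 0 x with h | h
  · rw [abs_of_nonneg h]
    refine le_trans ?_ (le_abs_self _)
    refine le_trans ?_ (Real.one_sub_inv_le_log_of_pos hpos)
    have : (1 + x)⁻¹ ≤ 1 - x / 2 := by
      rw [← one_div, div_le_iff₀ hpos]; nlinarith [abs_of_nonneg h]
    linarith
  · rw [abs_of_nonpos h]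
    refine le_trans ?_ (neg_le_abs _)
    have := Real.log_le_sub_one_of_pos hpos
    linarith

open IsDedekindDomain in
theorem aux_final (r : ℝ) (hr : 1 < r) (K : Type*) [Field K] [NumberField K]
    (m : ℕ) (hm : 0 < m) (χ : DirichletCharacter ℝ m)
    (hχ : ∀ a : ZMod m, χ a = -1 ∨ χ a = 0 ∨ χ a = 1)
    (hsum : Summable fun P : HeightOneSpectrum (𝓞 K) => (Ideal.absNorm P.asIdeal : ℝ) ^ (-r))
    (hkey : ∃ X0 : ℕ, ∀ X : ℕ, X0 ≤ X → 8 * (X : ℝ) ^ (-r) ≤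
      ∑' P : HeightOneSpectrum (𝓞 K), Set.indicator {P | X < Ideal.absNorm P.asIdeal}
        (fun P => (Ideal.absNorm P.asIdeal : ℝ) ^ (-r)) P) :
    Finite (ConnectedComponents
      ↥(closure (sigmaChi K χ r '' {I : Ideal (𝓞 K) | I ≠ 0}))) := by
  classical
  obtain ⟨X0, hX0⟩ := hkey
  set mI : Ideal (𝓞 K) := Ideal.span {(m : 𝓞 K)} with hmI
  have hmI0 : mI ≠ 0 := by
    simp [hmI, hm.ne']
  set X1 := max (max X0 (Ideal.absNorm mI)) 1 with hX1
  have hX1a : X0 ≤ X1 := by omega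
  have hX1b : Ideal.absNorm mI ≤ X1 := by omega
  have hX1c : 1 ≤ X1 := by omega
  set N : HeightOneSpectrum (𝓞 K) → ℕ := fun P => Ideal.absNorm P.asIdeal with hN
  have hN2 : ∀ P, 2 ≤ N P := fun P => HeightOneSpectrum.one_lt_absNorm P
  set y : HeightOneSpectrum (𝓞 K) → ℝ := fun P => (N P : ℝ) ^ (-r) with hy
  have hypos : ∀ P, 0 < y P := fun P => by
    have := hN2 P
    have : (0 : ℝ) < N P := by exact_mod_cast (by omega : 0 < N P)
    positivity
  have hy2 : ∀ P, y P ≤ 1 / 2 := by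
    intro P
    have h2 : (2 : ℝ) ≤ N P := by exact_mod_cast hN2 P
    calc y P ≤ (N P : ℝ) ^ (-1 : ℝ) := Real.rpow_le_rpow_of_exponent_le (by linarith) (by linarith)
      _ = (N P : ℝ)⁻¹ := Real.rpow_neg_one _
      _ ≤ 1 / 2 := by rw [one_div]; exact inv_anti₀ (by norm_num) h2
  set x : HeightOneSpectrum (𝓞 K) → ℝ := fun P => auxF K χ r P.asIdeal with hx
  have hxle : ∀ P, |x P| ≤ 1 / 2 := by
    intro P
    have : |x P| = |χ ((N P : ℕ) : ZMod m)| * y P := by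
      simp only [hx, auxF, abs_mul]
      rw [abs_of_nonneg (hypos P).le]
    rw [this]
    have h1 : |χ ((N P : ℕ) : ZMod m)| ≤ 1 := by
      rcases hχ ((N P : ℕ) : ZMod m) with h | h | h <;> simp [h]
    have := hy2 P
    have := hypos P
    nlinarith
  set T : Set (HeightOneSpectrum (𝓞 K)) := {P | X1 < N P} with hT
  have hxT : ∀ P ∈ T, |x P| = y P := by
    intro P hP
    have : |x P| = |χ ((N P : ℕ) : ZMod m)| * y P := by
      simp only [hx, auxF, abs_mul]
      rw [abs_of_nonneg (hypos P).le]
    rw [this]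
    have hne : χ ((N P : ℕ) : ZMod m) ≠ 0 := by
      intro h0
      have hnu : ¬ IsUnit ((N P : ℕ) : ZMod m) := by
        intro hu
        exact (hu.map χ).ne_zero h0
      rw [ZMod.isUnit_iff_coprime] at hnu
      obtain ⟨p, hp, hp1, hp2⟩ := Nat.Prime.not_coprime_iff_dvd.mp hnu
      have hNmem : ((N P : ℕ) : 𝓞 K) ∈ P.asIdeal := Ideal.absNorm_mem _
      have hNmem' : P.asIdeal ∣ Ideal.span {((N P : ℕ) : 𝓞 K)} := by
        rw [Ideal.dvd_iff_le, Ideal.span_singleton_le_iff_mem]; exact hNmem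
      have hpP : (p : 𝓞 K) ∈ P.asIdeal := by
        have hcard : Nat.card (𝓞 K ⧸ P.asIdeal) = N P := by
          simp only [hN, Ideal.absNorm_apply, Submodule.cardQuot_apply]
        have : Finite (𝓞 K ⧸ P.asIdeal) :=
          Nat.finite_of_card_ne_zero (by have := hN2 P; omega)
        have : Fact p.Prime := ⟨hp⟩
        obtain ⟨z, hz⟩ := exists_prime_addOrderOf_dvd_card' (G := 𝓞 K ⧸ P.asIdeal) p
          (hcard ▸ hp1)
        have h1 : p • z = 0 := hz ▸ addOrderOf_nsmul_eq_zero z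
        rw [nsmul_eq_mul] at h1
        rcases mul_eq_zero.mp h1 with h | h
        · rw [← Ideal.Quotient.eq_zero_iff_mem, map_natCast]
          exact h
        · rw [h, addOrderOf_zero] at hz
          exact absurd hz.symm hp.one_lt.ne'
      have hmP : (m : 𝓞 K) ∈ P.asIdeal := by
        obtain ⟨t, ht⟩ := hp2
        rw [ht, Nat.cast_mul]
        exact Ideal.mul_mem_right _ _ hpP
      have hdvd : P.asIdeal ∣ mI := by
        rw [Ideal.dvd_iff_le, hmI, Ideal.span_singleton_le_iff_mem]; exact hmP
      have h1 : N P ∣ Ideal.absNorm mI := Ideal.absNorm_dvd_absNorm_of_le (Ideal.le_of_dvd hdvd)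
      have h2 : N P ≤ Ideal.absNorm mI := Nat.le_of_dvd (Nat.pos_of_ne_zero (by
        rw [Ne, Ideal.absNorm_eq_zero_iff]; exact hmI0)) h1
      have : X1 < N P := hP
      omega
    have h1 : |χ ((N P : ℕ) : ZMod m)| = 1 := by
      rcases hχ ((N P : ℕ) : ZMod m) with h | h | h
      · simp [h]
      · exact absurd h hne
      · simp [h]
    rw [h1, one_mul]
  have hFfin : (Tᶜ).Finite := by
    have h1 : {I : Ideal (𝓞 K) | Ideal.absNorm I ≤ X1}.Finite := Ideal.finite_setOfPred_absNorm_le X1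
    have h2 : Set.InjOn (fun P : HeightOneSpectrum (𝓞 K) => P.asIdeal) (Tᶜ) :=
      fun P _ Q _ h => HeightOneSpectrum.ext h
    refine Set.Finite.of_finite_image (h1.subset ?_) h2
    rintro _ ⟨P, hP, rfl⟩
    exact not_lt.mp (show ¬ X1 < N P from hP)
  set F := hFfin.toFinset with hF
  have hFm : ∀ P, P ∈ F ↔ P ∉ T := by intro P; simp [hF]
  set w : HeightOneSpectrum (𝓞 K) → ℝ := T.indicator y with hw
  set f : HeightOneSpectrum (𝓞 K) → ℕ → ℝ :=
    fun P k => if P ∈ T then Real.log (auxS (x P) k) else 0 with hf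
  have hw0 : ∀ P, 0 ≤ w P := fun P => Set.indicator_nonneg (fun P _ => (hypos P).le) P
  have hws : Summable w := hsum.indicator T
  have hf0 : ∀ P, f P 0 = 0 := by intro P; simp [hf, auxS_zero]
  have hfb : ∀ P k, |f P k| ≤ 2 * w P := by
    intro P k
    by_cases h : P ∈ T
    · simp only [hf, hw, if_pos h, Set.indicator_of_mem h]
      rw [← hxT P h]
      exact auxS_log _ (hxle P) k
    · simp [hf, hw, h]
  have hf1 : ∀ P, w P / 2 ≤ |f P 1| := by
    intro P
    by_cases h : P ∈ T
    · simp only [hf, hw, if_pos h, Set.indicator_of_mem h, auxS_one]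
      rw [← hxT P h]
      exact aux_log_one _ (hxle P)
    · simp [hf, hw, h]
  have hNN : ∀ a, 8 * w a ≤ ∑' b, Set.indicator {b | N a < N b} w b := by
    intro a
    by_cases h : a ∈ T
    · have h1 := hX0 (N a) (le_trans hX1a (le_of_lt h))
      have h2 : Set.indicator {b | N a < N b} w = Set.indicator {b | N a < N b} y := by
        ext b
        by_cases hb : N a < N b
        · rw [Set.indicator_of_mem (by exact hb), Set.indicator_of_mem (by exact hb), hw,
            Set.indicator_of_mem]
          exact lt_trans (show X1 < N a from h) hb
        · rw [Set.indicator_of_notMem (by exact hb), Set.indicator_of_notMem (by exact hb)]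
      rw [h2]
      simp only [hw, Set.indicator_of_mem h]
      exact h1
    · have : w a = 0 := Set.indicator_of_notMem h _
      rw [this, mul_zero]
      exact tsum_nonneg fun b => Set.indicator_nonneg (fun P _ => hw0 P) b
  have hord := aux_chain N f w hw0 hws hf0 hfb hf1 hNN
  set V : (HeightOneSpectrum (𝓞 K) →₀ ℕ) → ℝ := fun e => e.sum f with hV
  have hTne : ∃ P0, P0 ∈ T := by
    by_contra hcon
    push Not at hcon
    have h1 := hX0 X1 hX1a
    have h2 : ∀ P, Set.indicator {P | X1 < Ideal.absNorm P.asIdeal}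
        (fun P : HeightOneSpectrum (𝓞 K) => (Ideal.absNorm P.asIdeal : ℝ) ^ (-r)) P = 0 :=
      fun P => Set.indicator_of_notMem (hcon P) _
    rw [tsum_congr h2, tsum_zero] at h1
    have : (0 : ℝ) < (X1 : ℝ) ^ (-r) := Real.rpow_pos_of_pos (by exact_mod_cast hX1c) _
    linarith
  obtain ⟨P0, hP0⟩ := hTne
  set W : (HeightOneSpectrum (𝓞 K) →₀ ℕ) → ℝ := fun e => ∏ P ∈ F, auxS (x P) (e P) with hW
  have hsig : ∀ e, sigmaChi K χ r (auxIdeal K e) = W e * Real.exp (V e) := by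
    intro e
    rw [sigma_auxIdeal]
    rw [Finsupp.prod_of_support_subset e (s := e.support ∪ F) Finset.subset_union_left _
      (fun P _ => auxS_zero _)]
    simp only [hV]
    rw [Finsupp.sum_of_support_subset e (s := e.support ∪ F) Finset.subset_union_left _
      (fun P _ => hf0 P), Real.exp_sum]
    have hWe : W e = ∏ P ∈ e.support ∪ F, if P ∈ F then auxS (x P) (e P) else 1 := by
      rw [Finset.prod_ite_mem, Finset.inter_eq_right.mpr Finset.subset_union_right]
    rw [hWe, ← Finset.prod_mul_distrib]
    refine Finset.prod_congr rfl fun P _ => ?_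
    by_cases h : P ∈ T
    · have h' : P ∉ F := by rw [hFm]; simpa using h
      rw [if_neg h', one_mul]
      simp only [hf, if_pos h]
      rw [Real.exp_log]
      have := (auxS_half (x P) (hxle P) (e P)).1
      linarith
    · have h' : P ∈ F := by rw [hFm]; exact h
      rw [if_pos h']
      simp [hf, h, hx]
  have hWlow : ∀ e, (1 / 2 : ℝ) ^ F.card ≤ W e := by
    intro e
    rw [← Finset.prod_const]
    exact Finset.prod_le_prod (fun _ _ => by norm_num) fun P _ => (auxS_half _ (hxle P) _).1
  have hWhi : ∀ e, W e ≤ (2 : ℝ) ^ F.card := by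
    intro e
    rw [← Finset.prod_const]
    exact Finset.prod_le_prod (fun P _ => by have := (auxS_half _ (hxle P) (e P)).1; linarith)
      fun P _ => (auxS_half _ (hxle P) _).2
  have hVb : ∀ e, V e ≤ 2 * ∑' P, w P := by
    intro e
    calc V e = ∑ P ∈ e.support, f P (e P) := rfl
      _ ≤ ∑ P ∈ e.support, 2 * w P :=
        Finset.sum_le_sum fun P _ => (le_abs_self _).trans (hfb P _)
      _ = 2 * ∑ P ∈ e.support, w P := by rw [Finset.mul_sum]
      _ ≤ 2 * ∑' P, w P := by
        have := hws.sum_le_tsum e.support (fun P _ => hw0 P)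
        linarith
  have hmix : ∀ e e', ∃ e'', W e'' = W e ∧ V e'' = V e' := by
    intro e e'
    refine ⟨e.filter (· ∈ F) + e'.filter (fun P => ¬ P ∈ F), ?_, ?_⟩
    · refine Finset.prod_congr rfl fun P hP => ?_
      simp [hP]
    · simp only [hV]
      rw [Finsupp.sum_of_support_subset _ (s := e.support ∪ e'.support) _ _ (fun P _ => hf0 P),
        Finsupp.sum_of_support_subset e' (s := e.support ∪ e'.support) Finset.subset_union_right _
          (fun P _ => hf0 P)]
      · refine Finset.sum_congr rfl fun P _ => ?_
        by_cases h : P ∈ F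
        · have : P ∉ T := (hFm P).mp h
          simp [hf, this]
        · simp [h]
      · intro P hP
        rw [Finsupp.mem_support_iff] at hP
        by_contra hcon
        simp only [Finset.mem_union, Finsupp.mem_support_iff, not_or, not_not] at hcon
        apply hP
        simp [Finsupp.filter_apply, hcon.1, hcon.2]
  set c : ℝ := (1 / 2 : ℝ) ^ F.card * |x P0| with hc
  have hx0pos : 0 < |x P0| := by rw [hxT P0 hP0]; exact hypos P0
  refine aux_grid _ ((2 : ℝ) ^ F.card * Real.exp (2 * ∑' P, w P)) c (by positivity) ?_ ?_
  · rintro _ ⟨I, hI, rfl⟩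
    obtain ⟨e, rfl⟩ := auxIdeal_surj K I hI
    rw [hsig]
    have h0 : 0 < W e := lt_of_lt_of_le (by positivity) (hWlow e)
    rw [abs_of_nonneg (by positivity)]
    gcongr
    · exact hWhi e
    · exact hVb e
  · rintro _ ⟨I, hI, rfl⟩
    obtain ⟨e, rfl⟩ := auxIdeal_surj K I hI
    rw [hsig]
    have h0 : 0 < W e := lt_of_lt_of_le (by positivity) (hWlow e)
    have hcont : Continuous fun v : ℝ => W e * Real.exp v := by fun_prop
    refine ⟨(fun v => W e * Real.exp v) '' closure (Set.range V), ?_, ?_, ?_, ?_⟩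
    · refine (image_closure_subset_closure_image hcont).trans (closure_mono ?_)
      rintro _ ⟨_, ⟨e', rfl⟩, rfl⟩
      obtain ⟨e'', h1, h2⟩ := hmix e e'
      refine ⟨auxIdeal K e'', auxIdeal_ne_zero K e'', ?_⟩
      rw [hsig, h1, h2]
    · exact hord.isPreconnected.image _ hcont.continuousOn
    · exact ⟨V e, subset_closure ⟨e, rfl⟩, rfl⟩
    · have hv0 : W e ∈ (fun v => W e * Real.exp v) '' closure (Set.range V) :=
        ⟨0, subset_closure ⟨0, by simp [hV]⟩, by simp⟩
      have hv1 : W e * (1 + x P0) ∈ (fun v => W e * Real.exp v) '' closure (Set.range V) := by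
        refine ⟨V (Finsupp.single P0 1), subset_closure ⟨_, rfl⟩, ?_⟩
        have : V (Finsupp.single P0 1) = Real.log (1 + x P0) := by
          simp only [hV]
          rw [Finsupp.sum_single_index (hf0 P0)]
          simp [hf, hP0, auxS_one]
        simp only [this]
        rw [Real.exp_log]
        have := (abs_le.mp (hxle P0)).1
        linarith
      have hcle : c ≤ W e * |x P0| := by
        rw [hc]; gcongr; exact hWlow e
      rcases le_total 0 (x P0) with h | h
      · rw [abs_of_nonneg h] at hcle
        exact ⟨_, hv0, _, hv1, by linarith⟩
      · rw [abs_of_nonpos h] at hcle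
        exact ⟨_, hv1, _, hv0, by linarith⟩

section keysec
open IsDedekindDomain Filter Topology

variable (K : Type*) [Field K] [NumberField K]

theorem idl_finite (Y : ℝ) :
    {I : Ideal (𝓞 K) | I ≠ 0 ∧ (Ideal.absNorm I : ℝ) ≤ Y}.Finite :=
  (Ideal.finite_setOfPred_absNorm_le ⌊Y⌋₊).subset fun _ hI => Nat.le_floor hI.2

/-- Nonzero ideals of norm at most `Y`. -/
noncomputable def idl (Y : ℝ) : Finset (Ideal (𝓞 K)) := (idl_finite K Y).toFinset

theorem mem_idl (Y : ℝ) (I : Ideal (𝓞 K)) :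
    I ∈ idl K Y ↔ I ≠ 0 ∧ (Ideal.absNorm I : ℝ) ≤ Y := by simp [idl]

/-- Counting function. -/
noncomputable def cnt (Y : ℝ) : ℝ := ((idl K Y).card : ℝ)

theorem cnt_nonneg (Y : ℝ) : 0 ≤ cnt K Y := Nat.cast_nonneg _

theorem norm_ge_one (I : Ideal (𝓞 K)) (hI : I ≠ 0) : (1 : ℝ) ≤ Ideal.absNorm I := by
  have : Ideal.absNorm I ≠ 0 := by rw [Ne, Ideal.absNorm_eq_zero_iff]; exact hI
  exact_mod_cast Nat.one_le_iff_ne_zero.mpr this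

theorem cnt_mono {Y Z : ℝ} (h : Y ≤ Z) : cnt K Y ≤ cnt K Z := by
  unfold cnt
  exact_mod_cast Finset.card_le_card fun I hI => by
    rw [mem_idl] at *; exact ⟨hI.1, hI.2.trans h⟩

theorem cnt_eq (Y : ℝ) : cnt K Y =
    (Nat.card {I : nonZeroDivisors (Ideal (𝓞 K)) // (Ideal.absNorm (I : Ideal (𝓞 K)) : ℝ) ≤ Y} : ℝ)
    := by
  unfold cnt
  congr 1
  rw [Nat.card_congr (Equiv.subtypeSubtypeEquivSubtypeInter
    (fun I : Ideal (𝓞 K) => I ∈ nonZeroDivisors (Ideal (𝓞 K)))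
    (fun I : Ideal (𝓞 K) => (Ideal.absNorm I : ℝ) ≤ Y))]
  symm
  apply Nat.subtype_card
  intro I
  rw [mem_idl, mem_nonZeroDivisors_iff_ne_zero]

theorem cnt_tendsto : ∃ κ : ℝ, 0 < κ ∧ Tendsto (fun Y => cnt K Y / Y) atTop (𝓝 κ) := by
  refine ⟨_, dedekindZeta_residue_pos K, ?_⟩
  simp only [cnt_eq]
  exact NumberField.Ideal.tendsto_norm_le_div_atTop₀ K

theorem cnt_le : ∃ C : ℝ, 0 < C ∧ ∀ Y : ℝ, 0 ≤ Y → cnt K Y ≤ C * Y := by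
  obtain ⟨κ, hκ, h⟩ := cnt_tendsto K
  obtain ⟨Y0, hY0⟩ := eventually_atTop.mp
    ((h.eventually (gt_mem_nhds (show κ < κ + 1 by linarith))).and (eventually_ge_atTop 1))
  refine ⟨max (κ + 1) (cnt K Y0), lt_of_lt_of_le (by linarith) (le_max_left _ _), ?_⟩
  intro Y hY
  rcases lt_or_ge Y 1 with h1 | h1
  · have : idl K Y = ∅ := by
      rw [Finset.eq_empty_iff_forall_notMem]
      intro I hI
      rw [mem_idl] at hI
      have := norm_ge_one K I hI.1
      linarith [hI.2]
    have h0 : cnt K Y = 0 := by simp [cnt, this]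
    rw [h0]
    have : 0 ≤ max (κ + 1) (cnt K Y0) := le_trans (by linarith) (le_max_left _ _)
    positivity
  · rcases le_total Y0 Y with h2 | h2
    · have := (hY0 Y h2).1
      rw [div_lt_iff₀ (by linarith)] at this
      refine this.le.trans ?_
      gcongr
      exact le_max_left _ _
    · refine (cnt_mono K h2).trans ?_
      have h3 := le_max_right (κ + 1) (cnt K Y0)
      have h4 := cnt_nonneg K Y0
      nlinarith

theorem cnt_dvd [DecidableEq (Ideal (𝓞 K))] (Y : ℝ) (Q : Ideal (𝓞 K)) (hQ : Q ≠ 0)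
    [DecidablePred fun I => Q ∣ I] :
    (((idl K Y).filter (fun I => Q ∣ I)).card : ℝ) = cnt K (Y / Ideal.absNorm Q) := by
  have hq : (0 : ℝ) < Ideal.absNorm Q := lt_of_lt_of_le one_pos (norm_ge_one K Q hQ)
  unfold cnt
  congr 1
  symm
  refine Finset.card_bij (fun I _ => Q * I) ?_ ?_ ?_
  · intro I hI
    rw [mem_idl] at hI
    rw [Finset.mem_filter, mem_idl]
    refine ⟨⟨mul_ne_zero hQ hI.1, ?_⟩, dvd_mul_right _ _⟩
    rw [map_mul, Nat.cast_mul]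
    have := hI.2
    rw [le_div_iff₀ hq] at this
    linarith
  · intro I _ J _ h
    exact mul_left_cancel₀ hQ h
  · intro I hI
    rw [Finset.mem_filter, mem_idl] at hI
    obtain ⟨⟨h1, h2⟩, J, rfl⟩ := hI
    refine ⟨J, ?_, rfl⟩
    rw [mem_idl]
    refine ⟨right_ne_zero_of_mul h1, ?_⟩
    rw [map_mul, Nat.cast_mul] at h2
    rw [le_div_iff₀ hq]
    linarith

theorem summable_primes (s : ℝ) (hs : 1 < s) :
    Summable fun P : HeightOneSpectrum (𝓞 K) => (Ideal.absNorm P.asIdeal : ℝ) ^ (-s) := by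
  classical
  obtain ⟨C, hC, hA⟩ := cnt_le K
  have hgeo : Summable fun j : ℕ => (2 * C) * ((2 : ℝ) ^ (1 - s)) ^ j := by
    apply Summable.mul_left
    apply summable_geometric_of_lt_one (by positivity)
    apply Real.rpow_lt_one_of_one_lt_of_neg (by norm_num) (by linarith)
  refine summable_of_sum_le (fun P => by positivity)
    (c := ∑' j : ℕ, (2 * C) * ((2 : ℝ) ^ (1 - s)) ^ j) ?_
  intro U
  set g : HeightOneSpectrum (𝓞 K) → ℕ := fun P => Nat.log 2 (Ideal.absNorm P.asIdeal) with hg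
  have h1 := Finset.sum_fiberwise_of_maps_to (s := U) (t := U.image g) (g := g)
    (fun P hP => Finset.mem_image_of_mem g hP)
    (fun P : HeightOneSpectrum (𝓞 K) => (Ideal.absNorm P.asIdeal : ℝ) ^ (-s))
  rw [← h1]
  refine le_trans (Finset.sum_le_sum ?_) (hgeo.sum_le_tsum (U.image g) (fun j _ => by positivity))
  intro j _
  have hN0 : ∀ P : HeightOneSpectrum (𝓞 K), Ideal.absNorm P.asIdeal ≠ 0 := fun P => by
    rw [Ne, Ideal.absNorm_eq_zero_iff]; exact P.ne_bot
  have hcard : (((U.filter fun P => g P = j).card : ℕ) : ℝ) ≤ C * 2 ^ (j + 1) := by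
    refine le_trans ?_ (hA (2 ^ (j + 1)) (by positivity))
    unfold cnt
    refine Nat.cast_le.mpr (Finset.card_le_card_of_injOn (fun P => P.asIdeal) ?_ ?_)
    · intro P hP
      simp only [Finset.coe_filter, Set.mem_ofPred_eq] at hP
      rw [Finset.mem_coe, mem_idl]
      refine ⟨P.ne_bot, ?_⟩
      have := Nat.lt_pow_succ_log_self (b := 2) (by norm_num) (Ideal.absNorm P.asIdeal)
      have h2 : Nat.log 2 (Ideal.absNorm P.asIdeal) = j := hP.2
      rw [h2] at this
      exact_mod_cast this.le
    · intro P _ Q _ h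
      exact HeightOneSpectrum.ext h
  have hterm : ∀ P ∈ U.filter fun P => g P = j,
      (Ideal.absNorm P.asIdeal : ℝ) ^ (-s) ≤ ((2 : ℝ) ^ j) ^ (-s) := by
    intro P hP
    rw [Finset.mem_filter] at hP
    apply Real.rpow_le_rpow_of_nonpos (by positivity) _ (by linarith)
    have := Nat.pow_log_le_self 2 (hN0 P)
    have h2 : Nat.log 2 (Ideal.absNorm P.asIdeal) = j := hP.2
    rw [h2] at this
    exact_mod_cast this
  refine (Finset.sum_le_card_nsmul _ _ _ hterm).trans ?_
  rw [nsmul_eq_mul]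
  have he : (2 * C) * ((2 : ℝ) ^ (1 - s)) ^ j = (C * 2 ^ (j + 1)) * ((2 : ℝ) ^ j) ^ (-s) := by
    have e1 : ((2 : ℝ) ^ (1 - s)) ^ j = (2 : ℝ) ^ j * ((2 : ℝ) ^ j) ^ (-s) := by
      rw [← Real.rpow_natCast, ← Real.rpow_mul (by norm_num), ← Real.rpow_natCast 2 j,
        ← Real.rpow_mul (by norm_num), ← Real.rpow_add (by norm_num)]
      congr 1; ring
    rw [e1, pow_succ]; ring
  rw [he]
  gcongr

theorem pr_finite (Y : ℝ) :
    {P : HeightOneSpectrum (𝓞 K) | (Ideal.absNorm P.asIdeal : ℝ) ≤ Y}.Finite := by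
  refine Set.Finite.of_finite_image (f := fun P => P.asIdeal) ((idl_finite K Y).subset ?_) ?_
  · rintro _ ⟨P, hP, rfl⟩
    exact ⟨P.ne_bot, hP⟩
  · intro P _ Q _ h
    exact HeightOneSpectrum.ext h

/-- Primes of norm at most `Y`. -/
noncomputable def pr (Y : ℝ) : Finset (HeightOneSpectrum (𝓞 K)) := (pr_finite K Y).toFinset

theorem mem_pr (Y : ℝ) (P : HeightOneSpectrum (𝓞 K)) :
    P ∈ pr K Y ↔ (Ideal.absNorm P.asIdeal : ℝ) ≤ Y := by simp [pr]

theorem two_le_norm (P : HeightOneSpectrum (𝓞 K)) : (2 : ℝ) ≤ Ideal.absNorm P.asIdeal := by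
  have h0 : Ideal.absNorm P.asIdeal ≠ 0 := by
    rw [Ne, Ideal.absNorm_eq_zero_iff]; exact P.ne_bot
  have h1 : Ideal.absNorm P.asIdeal ≠ 1 := by
    rw [Ne, Ideal.absNorm_eq_one_iff]; exact P.isPrime.ne_top
  exact_mod_cast (by omega : 2 ≤ Ideal.absNorm P.asIdeal)

open Classical in
theorem log_norm_ge (S : Finset (HeightOneSpectrum (𝓞 K))) (I : Ideal (𝓞 K)) (hI : I ≠ 0) :
    ∑ P ∈ S, (if P.asIdeal ∣ I then Real.log (Ideal.absNorm P.asIdeal) else 0)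
      ≤ Real.log (Ideal.absNorm I) := by
  rw [← Finset.sum_filter]
  have hd : (∏ P ∈ S.filter (fun P => P.asIdeal ∣ I), P.asIdeal) ∣ I := by
    refine Finset.prod_dvd_of_coprime ?_ ?_
    · intro P _ Q _ h
      have := HeightOneSpectrum.isCoprime_pow_of_ne P Q h 1 1
      simpa using this
    · intro P hP
      exact (Finset.mem_filter.mp hP).2
  have h1 : Ideal.absNorm (∏ P ∈ S.filter (fun P => P.asIdeal ∣ I), P.asIdeal)
      ≤ Ideal.absNorm I := by
    refine Nat.le_of_dvd ?_ (Ideal.absNorm_dvd_absNorm_of_le (Ideal.le_of_dvd hd))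
    have := norm_ge_one K I hI
    exact_mod_cast lt_of_lt_of_le one_pos this
  rw [map_prod] at h1
  rw [← Real.log_prod]
  · apply Real.log_le_log
    · apply Finset.prod_pos
      intro P _
      linarith [two_le_norm K P]
    · exact_mod_cast h1
  · intro P _
    linarith [two_le_norm K P]

open Classical in
theorem log_norm_le (Y : ℝ) (L : ℕ) (hL : Y ≤ L) (I : Ideal (𝓞 K)) (hI : I ≠ 0)
    (hY : (Ideal.absNorm I : ℝ) ≤ Y) :
    Real.log (Ideal.absNorm I) ≤ ∑ P ∈ pr K Y, ∑ k ∈ Finset.Icc 1 L,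
      (if P.asIdeal ^ k ∣ I then Real.log (Ideal.absNorm P.asIdeal) else 0) := by
  obtain ⟨e, rfl⟩ := auxIdeal_surj K I hI
  have hlog : ∀ P : HeightOneSpectrum (𝓞 K), 0 ≤ Real.log (Ideal.absNorm P.asIdeal) :=
    fun P => Real.log_nonneg (by linarith [two_le_norm K P])
  have hle : ∀ J : Ideal (𝓞 K), J ∣ auxIdeal K e →
      (Ideal.absNorm J : ℝ) ≤ Ideal.absNorm (auxIdeal K e) := by
    intro J hJ
    have : Ideal.absNorm J ≤ Ideal.absNorm (auxIdeal K e) := by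
      refine Nat.le_of_dvd ?_ (Ideal.absNorm_dvd_absNorm_of_le (Ideal.le_of_dvd hJ))
      have := norm_ge_one K _ hI
      exact_mod_cast lt_of_lt_of_le one_pos this
    exact_mod_cast this
  have hdvd : ∀ P ∈ e.support, P.asIdeal ^ (e P) ∣ auxIdeal K e := by
    intro P hP
    exact Finset.dvd_prod_of_mem (fun P => P.asIdeal ^ (e P)) hP
  have hlogeq : Real.log (Ideal.absNorm (auxIdeal K e)) =
      ∑ P ∈ e.support, (e P : ℝ) * Real.log (Ideal.absNorm P.asIdeal) := by
    unfold auxIdeal Finsupp.prod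
    rw [map_prod, Nat.cast_prod, Real.log_prod]
    · refine Finset.sum_congr rfl fun P _ => ?_
      rw [map_pow, Nat.cast_pow, Real.log_pow]
    · intro P _
      rw [map_pow, Nat.cast_pow]
      have := two_le_norm K P
      positivity
  rw [hlogeq]
  have hsub : e.support ⊆ pr K Y := by
    intro P hP
    rw [mem_pr]
    refine le_trans (hle _ (dvd_trans (dvd_pow_self _ ?_) (hdvd P hP))) hY
    exact Finsupp.mem_support_iff.mp hP
  refine le_trans ?_ (Finset.sum_le_sum_of_subset_of_nonneg hsub ?_)
  · refine Finset.sum_le_sum fun P hP => ?_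
    have heL : e P ≤ L := by
      have h1 : (2 : ℝ) ^ (e P) ≤ L := by
        calc (2 : ℝ) ^ (e P) ≤ (Ideal.absNorm P.asIdeal : ℝ) ^ (e P) := by
              gcongr; exact two_le_norm K P
          _ = (Ideal.absNorm (P.asIdeal ^ (e P)) : ℝ) := by rw [map_pow, Nat.cast_pow]
          _ ≤ L := ((hle _ (hdvd P hP)).trans hY).trans hL
      have h2 : 2 ^ (e P) ≤ L := by exact_mod_cast h1
      exact (Nat.lt_two_pow_self).le.trans h2
    calc (e P : ℝ) * Real.log (Ideal.absNorm P.asIdeal)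
        = ∑ k ∈ Finset.Icc 1 (e P), Real.log (Ideal.absNorm P.asIdeal) := by simp
      _ = ∑ k ∈ Finset.Icc 1 (e P),
          (if P.asIdeal ^ k ∣ auxIdeal K e then Real.log (Ideal.absNorm P.asIdeal) else 0) := by
          refine Finset.sum_congr rfl fun k hk => ?_
          rw [if_pos]
          exact (pow_dvd_pow _ (Finset.mem_Icc.mp hk).2).trans (hdvd P hP)
      _ ≤ _ := by
          refine Finset.sum_le_sum_of_subset_of_nonneg (Finset.Icc_subset_Icc_right heL) ?_
          intro k _ _
          split_ifs
          · exact hlog P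
          · exact le_rfl
  · intro P _ _
    refine Finset.sum_nonneg fun k _ => ?_
    split_ifs
    · exact hlog P
    · exact le_rfl

/-- The sum of logs of norms. -/
noncomputable def TT (Y : ℝ) : ℝ := ∑ I ∈ idl K Y, Real.log (Ideal.absNorm I)

open Classical in
theorem swap_dvd (Y : ℝ) (Q : Ideal (𝓞 K)) (hQ : Q ≠ 0) (c : ℝ) :
    ∑ I ∈ idl K Y, (if Q ∣ I then c else 0) = c * cnt K (Y / Ideal.absNorm Q) := by
  rw [← cnt_dvd K Y Q hQ, ← Finset.sum_filter, Finset.sum_const, nsmul_eq_mul, mul_comm]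

theorem TT_ge_primes (Y : ℝ) (S : Finset (HeightOneSpectrum (𝓞 K))) :
    ∑ P ∈ S, Real.log (Ideal.absNorm P.asIdeal) * cnt K (Y / Ideal.absNorm P.asIdeal)
      ≤ TT K Y := by
  classical
  have : ∀ P ∈ S, Real.log (Ideal.absNorm P.asIdeal) * cnt K (Y / Ideal.absNorm P.asIdeal) =
      ∑ I ∈ idl K Y, (if P.asIdeal ∣ I then Real.log (Ideal.absNorm P.asIdeal) else 0) :=
    fun P _ => (swap_dvd K Y P.asIdeal P.ne_bot _).symm
  rw [Finset.sum_congr rfl this, Finset.sum_comm]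
  exact Finset.sum_le_sum fun I hI => log_norm_ge K S I ((mem_idl K Y I).mp hI).1

theorem TT_le (Y : ℝ) : TT K Y ≤ cnt K Y * Real.log Y := by
  unfold TT cnt
  rw [← nsmul_eq_mul]
  refine Finset.sum_le_card_nsmul _ _ _ fun I hI => ?_
  rw [mem_idl] at hI
  exact Real.log_le_log (by linarith [norm_ge_one K I hI.1]) hI.2

theorem TT_ge (Y Z : ℝ) (hZ : 1 ≤ Z) (hZY : Z ≤ Y) :
    (cnt K Y - cnt K Z) * Real.log Z ≤ TT K Y := by
  classical
  have hsub : idl K Z ⊆ idl K Y := by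
    intro I hI
    rw [mem_idl] at *
    exact ⟨hI.1, hI.2.trans hZY⟩
  unfold TT
  rw [← Finset.sum_sdiff hsub]
  have h1 : (cnt K Y - cnt K Z) * Real.log Z ≤
      ∑ I ∈ idl K Y \ idl K Z, Real.log (Ideal.absNorm I) := by
    have : cnt K Y - cnt K Z = ((idl K Y \ idl K Z).card : ℝ) := by
      unfold cnt
      rw [Finset.card_sdiff_of_subset hsub, Nat.cast_sub (Finset.card_le_card hsub)]
    rw [this, ← nsmul_eq_mul]
    refine Finset.card_nsmul_le_sum _ _ _ fun I hI => ?_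
    rw [Finset.mem_sdiff, mem_idl, mem_idl] at hI
    apply Real.log_le_log (by linarith)
    by_contra h
    exact hI.2 ⟨hI.1.1, (not_le.mp h).le⟩
  have h2 : 0 ≤ ∑ I ∈ idl K Z, Real.log (Ideal.absNorm I) :=
    Finset.sum_nonneg fun I hI => Real.log_nonneg (norm_ge_one K I ((mem_idl K Z I).mp hI).1)
  linarith

theorem TT_le_primes : ∃ D : ℝ, 0 ≤ D ∧ ∀ Y : ℝ, 0 ≤ Y → TT K Y ≤
    ∑ P ∈ pr K Y, Real.log (Ideal.absNorm P.asIdeal) * cnt K (Y / Ideal.absNorm P.asIdeal)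
      + D * Y := by
  classical
  obtain ⟨C, hC, hA⟩ := cnt_le K
  have hs := summable_primes K (3 / 2) (by norm_num)
  refine ⟨4 * C * ∑' P : HeightOneSpectrum (𝓞 K), (Ideal.absNorm P.asIdeal : ℝ) ^ (-(3 / 2 : ℝ)),
    mul_nonneg (by positivity) (tsum_nonneg fun P => by positivity), ?_⟩
  intro Y hY
  set L := ⌈Y⌉₊ + 1 with hL
  have hYL : Y ≤ L := by
    have := Nat.le_ceil Y
    push_cast [hL]; linarith
  have h1 : TT K Y ≤ ∑ P ∈ pr K Y, ∑ k ∈ Finset.Icc 1 L,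
      Real.log (Ideal.absNorm P.asIdeal) * cnt K (Y / (Ideal.absNorm P.asIdeal : ℝ) ^ k) := by
    calc TT K Y ≤ ∑ I ∈ idl K Y, ∑ P ∈ pr K Y, ∑ k ∈ Finset.Icc 1 L,
        (if P.asIdeal ^ k ∣ I then Real.log (Ideal.absNorm P.asIdeal) else 0) :=
        Finset.sum_le_sum fun I hI => by
          rw [mem_idl] at hI
          exact log_norm_le K Y L hYL I hI.1 hI.2
      _ = _ := by
        rw [Finset.sum_comm]
        refine Finset.sum_congr rfl fun P _ => ?_
        rw [Finset.sum_comm]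
        refine Finset.sum_congr rfl fun k _ => ?_
        rw [swap_dvd K Y _ (pow_ne_zero _ P.ne_bot), map_pow, Nat.cast_pow]
  refine h1.trans ?_
  have h2 : ∀ P ∈ pr K Y, ∑ k ∈ Finset.Icc 1 L,
      Real.log (Ideal.absNorm P.asIdeal) * cnt K (Y / (Ideal.absNorm P.asIdeal : ℝ) ^ k) ≤
      Real.log (Ideal.absNorm P.asIdeal) * cnt K (Y / Ideal.absNorm P.asIdeal) +
        4 * C * Y * (Ideal.absNorm P.asIdeal : ℝ) ^ (-(3 / 2 : ℝ)) := by
    intro P _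
    have hq := two_le_norm K P
    set q : ℝ := (Ideal.absNorm P.asIdeal : ℝ) with hqdef
    have hlog0 : 0 ≤ Real.log q := Real.log_nonneg (by linarith)
    rw [← Finset.add_sum_Ioc_eq_sum_Icc (by omega : 1 ≤ L), pow_one]
    gcongr
    have hgeom : ∀ n : ℕ, ∑ k ∈ Finset.Ioc 1 (n + 1), (1 / q ^ k) ≤ 2 / q ^ 2 * (1 - 1 / q ^ n) := by
      intro n
      induction n with
      | zero => simp
      | succ n ih =>
        rw [Finset.sum_Ioc_succ_top (by omega)]
        have hu : (0 : ℝ) < 1 / q ^ 2 * (1 / q ^ n) := by positivity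
        have hv : 1 / q ≤ 1 / 2 := one_div_le_one_div_of_le (by norm_num) hq
        have e1 : 1 / q ^ (n + 1 + 1) = 1 / q ^ 2 * (1 / q ^ n) := by
          rw [one_div_mul_one_div, ← pow_add]; congr 2; ring
        have e2 : 2 / q ^ 2 * (1 - 1 / q ^ (n + 1)) =
            2 / q ^ 2 - 2 * (1 / q ^ 2 * (1 / q ^ n)) * (1 / q) := by
          rw [pow_succ]; field_simp; ring
        have e3 : 2 / q ^ 2 * (1 - 1 / q ^ n) =
            2 / q ^ 2 - 2 * (1 / q ^ 2 * (1 / q ^ n)) := by ring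
        rw [e3] at ih
        rw [e1, e2]
        nlinarith
    have hsumk : ∑ k ∈ Finset.Ioc 1 L, (1 / q ^ k) ≤ 2 / q ^ 2 := by
      refine (hgeom _).trans ?_
      have : 0 ≤ 2 / q ^ 2 * (1 / q ^ ⌈Y⌉₊) := by positivity
      linarith
    have hlogle : Real.log q ≤ 2 * q ^ (1 / 2 : ℝ) := by
      have := Real.log_le_rpow_div (x := q) (by linarith) (ε := 1 / 2) (by norm_num)
      linarith
    calc ∑ k ∈ Finset.Ioc 1 L, Real.log q * cnt K (Y / q ^ k)
        ≤ ∑ k ∈ Finset.Ioc 1 L, Real.log q * (C * Y) * (1 / q ^ k) := by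
          refine Finset.sum_le_sum fun k _ => ?_
          have := hA (Y / q ^ k) (by positivity)
          calc Real.log q * cnt K (Y / q ^ k) ≤ Real.log q * (C * (Y / q ^ k)) := by gcongr
            _ = _ := by ring
      _ = Real.log q * (C * Y) * ∑ k ∈ Finset.Ioc 1 L, (1 / q ^ k) := by rw [Finset.mul_sum]
      _ ≤ (2 * q ^ (1 / 2 : ℝ)) * (C * Y) * (2 / q ^ 2) := by gcongr
      _ = 4 * C * Y * (q ^ (1 / 2 : ℝ) / q ^ 2) := by ring
      _ = _ := by
        congr 1
        rw [← Real.rpow_natCast q 2, ← Real.rpow_sub (by linarith)]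
        norm_num
  refine (Finset.sum_le_sum h2).trans ?_
  rw [Finset.sum_add_distrib, ← Finset.mul_sum]
  have h3 := hs.sum_le_tsum (pr K Y) (fun P _ => by positivity)
  have h4 : 0 ≤ 4 * C * Y := by positivity
  have h5 := mul_le_mul_of_nonneg_left h3 h4
  linarith

theorem key_step (r δ ε κ t0 C D X : ℝ) (hr : 1 < r) (hδ : 0 < δ) (hδr : δ * (r - 1) = 1 / 2)
    (hε : 0 < ε) (hε1 : ε < 1) (hκ : 0 < κ) (ht0 : 1 ≤ t0)
    (hlo : ∀ t, t0 ≤ t → (1 - ε) * κ * t ≤ cnt K t)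
    (hhi : ∀ t, t0 ≤ t → cnt K t ≤ (1 + ε) * κ * t)
    (hC : 0 < C) (hA : ∀ Y : ℝ, 0 ≤ Y → cnt K Y ≤ C * Y)
    (hD : ∀ Y : ℝ, 0 ≤ Y → TT K Y ≤
      ∑ P ∈ pr K Y, Real.log (Ideal.absNorm P.asIdeal) * cnt K (Y / Ideal.absNorm P.asIdeal)
      + D * Y)
    (hX1 : 1 ≤ X) (hXδ : t0 ≤ X ^ δ) (hεX : t0 ≤ ε * X ^ (1 + δ))
    (htail : ∑' P : HeightOneSpectrum (𝓞 K),
      Set.indicator {P : HeightOneSpectrum (𝓞 K) | X < Ideal.absNorm P.asIdeal}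
        (fun P => (Ideal.absNorm P.asIdeal : ℝ) ^ (-r)) P ≤ 8 * X ^ (-r)) :
    ((1 - ε) - (1 + ε) * ε) * κ * ((1 + δ) * Real.log X + Real.log ε) ≤
      (1 + ε) * κ * ((1 + ε) / (1 - ε) * (Real.log X + Real.log t0))
        + 8 * C * ((1 + δ) * Real.log X) * X ^ (-(1 / 2 : ℝ)) + D := by
  classical
  set Y := X ^ (1 + δ) with hYdef
  have hX0 : 0 < X := by linarith
  have hY0 : 0 < Y := by positivity
  have hlogY : Real.log Y = (1 + δ) * Real.log X := by rw [hYdef, Real.log_rpow hX0]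
  have hYX : Y = X * X ^ δ := by rw [hYdef, Real.rpow_add hX0, Real.rpow_one]
  have hXY : X ≤ Y := by rw [hYX]; nlinarith
  have hpos : ∀ P : HeightOneSpectrum (𝓞 K), (0 : ℝ) < Ideal.absNorm P.asIdeal :=
    fun P => by linarith [two_le_norm K P]
  have hlogP : ∀ P : HeightOneSpectrum (𝓞 K), 0 ≤ Real.log (Ideal.absNorm P.asIdeal) :=
    fun P => Real.log_nonneg (by linarith [two_le_norm K P])
  set M := ∑ P ∈ pr K X, Real.log (Ideal.absNorm P.asIdeal) / Ideal.absNorm P.asIdeal with hM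
  -- first bound
  have hMle : M ≤ (1 + ε) / (1 - ε) * (Real.log X + Real.log t0) := by
    have h1 : (1 - ε) * κ * (X * t0) * M ≤ TT K (X * t0) := by
      refine le_trans ?_ (TT_ge_primes K (X * t0) (pr K X))
      rw [hM, Finset.mul_sum]
      refine Finset.sum_le_sum fun P hP => ?_
      rw [mem_pr] at hP
      have h2 : t0 ≤ X * t0 / Ideal.absNorm P.asIdeal := by
        rw [le_div_iff₀ (hpos P)]
        nlinarith
      calc _ = Real.log (Ideal.absNorm P.asIdeal) *
            ((1 - ε) * κ * (X * t0 / Ideal.absNorm P.asIdeal)) := by ring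
        _ ≤ _ := mul_le_mul_of_nonneg_left (hlo _ h2) (hlogP P)
    have h3 : TT K (X * t0) ≤ (1 + ε) * κ * (X * t0) * (Real.log X + Real.log t0) := by
      refine (TT_le K _).trans ?_
      rw [Real.log_mul (by linarith) (by linarith)]
      refine mul_le_mul_of_nonneg_right (hhi _ (by nlinarith)) ?_
      have := Real.log_nonneg hX1
      have := Real.log_nonneg ht0
      linarith
    have h4 : 0 < κ * (X * t0) := by positivity
    have h5 : κ * (X * t0) * ((1 - ε) * M) ≤
        κ * (X * t0) * ((1 + ε) * (Real.log X + Real.log t0)) := by linarith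
    have h6 := le_of_mul_le_mul_left h5 h4
    rw [div_mul_eq_mul_div, le_div_iff₀ (by linarith)]
    linarith
  -- lower bound
  have hlow : ((1 - ε) - (1 + ε) * ε) * κ * Y * ((1 + δ) * Real.log X + Real.log ε) ≤ TT K Y := by
    refine le_trans ?_ (TT_ge K Y (ε * Y) (by linarith) (by nlinarith))
    rw [Real.log_mul (by linarith) (by linarith), hlogY, add_comm (Real.log ε)]
    refine mul_le_mul_of_nonneg_right ?_ ?_
    · have h1 := hlo Y (by nlinarith)
      have h2 := hhi (ε * Y) hεX
      linarith
    · rw [← hlogY, add_comm, ← Real.log_mul (by linarith) (by linarith)]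
      exact Real.log_nonneg (by linarith)
  -- upper bound
  have hsub : pr K X ⊆ pr K Y := by
    intro P hP
    rw [mem_pr] at *
    linarith
  have hsmall : ∑ P ∈ pr K X, Real.log (Ideal.absNorm P.asIdeal) *
      cnt K (Y / Ideal.absNorm P.asIdeal) ≤ (1 + ε) * κ * Y * M := by
    rw [hM, Finset.mul_sum]
    refine Finset.sum_le_sum fun P hP => ?_
    rw [mem_pr] at hP
    have h2 : t0 ≤ Y / Ideal.absNorm P.asIdeal := by
      rw [le_div_iff₀ (hpos P), hYX]
      nlinarith [hpos P]
    calc _ ≤ Real.log (Ideal.absNorm P.asIdeal) *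
            ((1 + ε) * κ * (Y / Ideal.absNorm P.asIdeal)) :=
          mul_le_mul_of_nonneg_left (hhi _ h2) (hlogP P)
      _ = _ := by ring
  have hpw : Y ^ (r - 1) * X ^ (-r) = X ^ (-(1 / 2 : ℝ)) := by
    rw [hYdef, ← Real.rpow_mul hX0.le, ← Real.rpow_add hX0]
    congr 1
    linarith
  have hlogX : 0 ≤ Real.log X := Real.log_nonneg hX1
  have hbig : ∑ P ∈ pr K Y \ pr K X, Real.log (Ideal.absNorm P.asIdeal) *
      cnt K (Y / Ideal.absNorm P.asIdeal) ≤
      8 * C * ((1 + δ) * Real.log X) * X ^ (-(1 / 2 : ℝ)) * Y := by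
    have hterm : ∀ P ∈ pr K Y \ pr K X, Real.log (Ideal.absNorm P.asIdeal) *
        cnt K (Y / Ideal.absNorm P.asIdeal) ≤ ((1 + δ) * Real.log X) * C * Y * Y ^ (r - 1) *
        Set.indicator {P : HeightOneSpectrum (𝓞 K) | X < Ideal.absNorm P.asIdeal}
        (fun P => (Ideal.absNorm P.asIdeal : ℝ) ^ (-r)) P := by
      intro P hP
      rw [Finset.mem_sdiff, mem_pr, mem_pr, not_le] at hP
      rw [Set.indicator_of_mem (by exact hP.2), ← hlogY]
      have hp := hpos P
      have h1 : (1 : ℝ) / Ideal.absNorm P.asIdeal ≤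
          Y ^ (r - 1) * (Ideal.absNorm P.asIdeal : ℝ) ^ (-r) := by
        calc (1 : ℝ) / Ideal.absNorm P.asIdeal = (Ideal.absNorm P.asIdeal : ℝ) ^ (r - 1) *
              (Ideal.absNorm P.asIdeal : ℝ) ^ (-r) := by
              rw [← Real.rpow_add hp, show r - 1 + -r = -1 by ring, Real.rpow_neg_one, one_div]
          _ ≤ _ := by
              refine mul_le_mul_of_nonneg_right ?_ (by positivity)
              exact Real.rpow_le_rpow hp.le hP.1 (by linarith)
      have hl : Real.log (Ideal.absNorm P.asIdeal) ≤ Real.log Y := Real.log_le_log hp hP.1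
      have hlY : 0 ≤ Real.log Y := (hlogP P).trans hl
      calc _ ≤ Real.log Y * (C * (Y / Ideal.absNorm P.asIdeal)) :=
            mul_le_mul hl (hA _ (by positivity)) (cnt_nonneg K _) hlY
        _ = (Real.log Y * C * Y) * (1 / Ideal.absNorm P.asIdeal) := by ring
        _ ≤ (Real.log Y * C * Y) * (Y ^ (r - 1) * (Ideal.absNorm P.asIdeal : ℝ) ^ (-r)) :=
            mul_le_mul_of_nonneg_left h1 (by positivity)
        _ = _ := by ring
    refine (Finset.sum_le_sum hterm).trans ?_
    rw [← Finset.mul_sum]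
    have hsm := (summable_primes K r hr).indicator
      {P : HeightOneSpectrum (𝓞 K) | X < Ideal.absNorm P.asIdeal}
    have h1 := hsm.sum_le_tsum (pr K Y \ pr K X)
      (fun P _ => Set.indicator_nonneg (fun P _ => by positivity) P)
    have h2 := h1.trans htail
    calc _ ≤ ((1 + δ) * Real.log X) * C * Y * Y ^ (r - 1) * (8 * X ^ (-r)) :=
          mul_le_mul_of_nonneg_left h2 (by positivity)
      _ = 8 * C * ((1 + δ) * Real.log X) * (Y ^ (r - 1) * X ^ (-r)) * Y := by ring
      _ = _ := by rw [hpw]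
  have hup := hD Y hY0.le
  rw [← Finset.sum_sdiff hsub] at hup
  have hMM : (1 + ε) * κ * Y * M ≤
      (1 + ε) * κ * Y * ((1 + ε) / (1 - ε) * (Real.log X + Real.log t0)) :=
    mul_le_mul_of_nonneg_left hMle (by positivity)
  refine le_of_mul_le_mul_right ?_ hY0
  linarith

theorem exists_eps (δ : ℝ) (hδ : 0 < δ) : ∃ ε : ℝ, 0 < ε ∧ ε < 1 ∧
    0 < ((1 - ε) - (1 + ε) * ε) * (1 + δ) - (1 + ε) * ((1 + ε) / (1 - ε)) := by
  have hc : ContinuousAt (fun ε : ℝ =>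
      ((1 - ε) - (1 + ε) * ε) * (1 + δ) - (1 + ε) * ((1 + ε) / (1 - ε))) 0 := by
    refine ContinuousAt.sub (by fun_prop) (ContinuousAt.mul (by fun_prop)
      (ContinuousAt.div (by fun_prop) (by fun_prop) (by norm_num)))
  have h0 := hc.eventually (lt_mem_nhds (a := (0 : ℝ)) (by norm_num; exact hδ))
  have h1 : ∀ᶠ ε : ℝ in 𝓝[>] 0, _ := h0.filter_mono nhdsWithin_le_nhds
  have h2 : ∀ᶠ ε : ℝ in 𝓝[>] (0 : ℝ), ε < 1 :=
    (gt_mem_nhds (show (0 : ℝ) < 1 by norm_num)).filter_mono nhdsWithin_le_nhds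
  obtain ⟨ε, ⟨h3, h4⟩, h5⟩ := ((h1.and h2).and self_mem_nhdsWithin).exists
  exact ⟨ε, h5, h4, h3⟩

theorem key (r : ℝ) (hr : 1 < r) : ∃ X0 : ℕ, ∀ X : ℕ, X0 ≤ X → 8 * (X : ℝ) ^ (-r) ≤
    ∑' P : HeightOneSpectrum (𝓞 K),
      Set.indicator {P : HeightOneSpectrum (𝓞 K) | X < Ideal.absNorm P.asIdeal}
        (fun P => (Ideal.absNorm P.asIdeal : ℝ) ^ (-r)) P := by
  set δ : ℝ := 1 / (2 * (r - 1)) with hδdef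
  have hr1 : 0 < r - 1 := by linarith
  have hδ : 0 < δ := by positivity
  have hδr : δ * (r - 1) = 1 / 2 := by rw [hδdef]; field_simp
  obtain ⟨ε, hε, hε1, ha⟩ := exists_eps δ hδ
  obtain ⟨κ, hκ, hlim⟩ := cnt_tendsto K
  obtain ⟨C, hC, hA⟩ := cnt_le K
  obtain ⟨D, hD0, hD⟩ := TT_le_primes K
  have e1 := hlim.eventually (lt_mem_nhds (show (1 - ε) * κ < κ by nlinarith))
  have e2 := hlim.eventually (gt_mem_nhds (show κ < (1 + ε) * κ by nlinarith))
  obtain ⟨t0, ht0⟩ := eventually_atTop.mp ((e1.and e2).and (eventually_ge_atTop 1))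
  have ht01 : 1 ≤ t0 := (ht0 t0 le_rfl).2
  have hlo : ∀ t, t0 ≤ t → (1 - ε) * κ * t ≤ cnt K t := by
    intro t ht
    have := (ht0 t ht).1.1
    rw [lt_div_iff₀ (by linarith)] at this
    exact this.le
  have hhi : ∀ t, t0 ≤ t → cnt K t ≤ (1 + ε) * κ * t := by
    intro t ht
    have := (ht0 t ht).1.2
    rw [div_lt_iff₀ (by linarith)] at this
    exact this.le
  set a := ((1 - ε) - (1 + ε) * ε) * (1 + δ) - (1 + ε) * ((1 + ε) / (1 - ε)) with hadef
  set B := D + (1 + ε) * κ * ((1 + ε) / (1 - ε) * Real.log t0) -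
    ((1 - ε) - (1 + ε) * ε) * κ * Real.log ε with hB
  have hxx : Tendsto (fun X : ℝ => X ^ (-(1 / 2 : ℝ))) atTop (𝓝 0) :=
    tendsto_rpow_neg_atTop (by norm_num)
  have hco : Tendsto (fun X : ℝ => κ * a - 8 * C * (1 + δ) * X ^ (-(1 / 2 : ℝ))) atTop
      (𝓝 (κ * a)) := by
    have := (tendsto_const_nhds (x := κ * a)).sub (hxx.const_mul (8 * C * (1 + δ)))
    simpa using this
  have hbig := (hco.pos_mul_atTop (by positivity) Real.tendsto_log_atTop).eventually_gt_atTop B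
  have f1 : ∀ᶠ X : ℝ in atTop, t0 ≤ X ^ δ := (tendsto_rpow_atTop hδ).eventually_ge_atTop t0
  have f2 : ∀ᶠ X : ℝ in atTop, t0 ≤ ε * X ^ (1 + δ) :=
    ((tendsto_rpow_atTop (show 0 < 1 + δ by linarith)).const_mul_atTop hε).eventually_ge_atTop t0
  obtain ⟨X0, hX0⟩ := eventually_atTop.mp
    (tendsto_natCast_atTop_atTop.eventually (((hbig.and f1).and f2).and (eventually_ge_atTop (1 : ℝ))))
  refine ⟨X0, fun X hX => ?_⟩
  obtain ⟨⟨⟨g1, g2⟩, g3⟩, g4⟩ := hX0 X hX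
  by_contra hcon
  rw [not_le] at hcon
  have := key_step K r δ ε κ t0 C D X hr hδ hδr hε hε1 hκ ht01 hlo hhi hC hA hD g4 g2 g3
    (by simpa only [Nat.cast_lt] using hcon.le)
  simp only [hadef, hB] at g1
  linarith

end keysec

/-- For `r > 1` and a real Dirichlet character `χ`, the closure of the image of the twisted
ideal divisor function on the nonzero integral ideals of a number field has finitely many
connected components. -/
theorem stmt0 (r : ℝ) (hr : 1 < r) (K : Type*) [Field K] [NumberField K]
    (m : ℕ) (hm : 0 < m) (χ : DirichletCharacter ℝ m)
    (hχ : ∀ a : ZMod m, χ a = -1 ∨ χ a = 0 ∨ χ a = 1) :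
    Finite (ConnectedComponents
      ↥(closure (sigmaChi K χ r '' {I : Ideal (𝓞 K) | I ≠ 0}))) := by
  exact aux_final r hr K m hm χ hχ (summable_primes K r hr) (key K r hr)
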